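/- Let G be a connected graph possessing a free parameter set of cardinality r. Then for every even natural number k > 2r, the number of basic k-covers of G is at least the binomial coefficient C(k/2+1, r). -/

import Mathlib

/-!
Prescribe an antitone sequence of values `c i ≤ k / 2` on the parameters `a i`, and give every other
vertex the least value, but at least `k / 2` rounded up, that covers its edges to the parameters.
As `c` is antitone and the neighbours of `b i` among the parameters are `a j` with `j ≤ i`, the
vertex `b i` gets exactly `k - c i`. So each edge `{a i, b i}` is tight, which forces every basic
cover below this cover to keep the values `c i`. Hence there are at least as many basic covers as
antitone sequences, that is, as multisets of `r` values in `{0, …, k / 2}`; the binomial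
coefficient `C(k / 2 + 1, r)` counts only the sets among these.
-/

/-- A `k`-cover of a graph `G`. -/
def IsCover {n : ℕ} (G : SimpleGraph (Fin n)) (k : ℕ) (α : Fin n → ℕ) : Prop :=
  ∀ ⦃i j : Fin n⦄, G.Adj i j → k ≤ α i + α j

/-- A basic `k`-cover. -/
def IsBasicCover {n : ℕ} (G : SimpleGraph (Fin n)) (k : ℕ) (α : Fin n → ℕ) : Prop :=
  IsCover G k α ∧ ∀ β : Fin n → ℕ, β ≤ α → IsCover G k β → β = α

/-- A free parameter pair. -/
def IsFreeParameterPair {n r : ℕ} (G : SimpleGraph (Fin n)) (a b : Fin r → Fin n) : Prop :=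
  Function.Injective a ∧ Function.Injective b ∧
  (∀ i j : Fin r, ¬ G.Adj (a i) (a j)) ∧
  (∀ i j : Fin r, a i ≠ b j) ∧
  (∀ i : Fin r, G.Adj (a i) (b i)) ∧
  (∀ i j : Fin r, G.Adj (a i) (b j) → i ≤ j)

/-- `G` has a free parameter set of cardinality `r`. -/
def HasFreeParameterSet {n : ℕ} (G : SimpleGraph (Fin n)) (r : ℕ) : Prop :=
  ∃ a b : Fin r → Fin n, IsFreeParameterPair G a b

theorem choose_succ_le_choose_add (m r : ℕ) : (m + 1).choose r ≤ (m + r).choose r := by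
  obtain rfl | hr := r.eq_zero_or_pos
  · simp only [Nat.choose_zero_right, le_refl]
  · exact Nat.choose_le_choose r (Nat.add_le_add_left hr m)

theorem card_antitone_eq_multichoose (α : Type*) [LinearOrder α] (r : ℕ) :
    Nat.card {c : Fin r → α // Antitone c} = (Nat.card α).multichoose r := by
  let values (c : {c : Fin r → α // Antitone c}) : Sym α r := ⟨List.ofFn c.1, by simp⟩
  have values_injective : Function.Injective values := fun c d hcd =>
    have hperm : (List.ofFn c.1).Perm (List.ofFn d.1) :=
      Multiset.coe_eq_coe.1 (congrArg Subtype.val hcd)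
    Subtype.ext <| List.ofFn_injective <|
      hperm.eq_of_sortedGE c.2.sortedGE_ofFn d.2.sortedGE_ofFn
  have values_surjective : Function.Surjective values := by
    rintro ⟨s, hs⟩
    obtain ⟨l, hl, rfl⟩ : ∃ l : List α, l.SortedGE ∧ (l : Multiset α) = s :=
      ⟨s.sort (· ≥ ·), (s.pairwise_sort _).sortedGE, s.sort_eq _⟩
    obtain rfl : l.length = r := hs
    exact ⟨⟨l.get, hl.antitone_get⟩, Subtype.ext (congrArg Multiset.ofList l.ofFn_get)⟩
  rw [Nat.card_congr (Equiv.ofBijective values ⟨values_injective, values_surjective⟩),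
    Sym.natCard_sym_eq_multichoose]

section BasicCover

variable {n k : ℕ} {G : SimpleGraph (Fin n)} {α β : Fin n → ℕ}

theorem isBasicCover_iff_minimal : IsBasicCover G k α ↔ Minimal (IsCover G k) α :=
  ⟨fun h => ⟨h.1, fun β hβ hle => (h.2 β hle hβ).ge⟩,
    fun h => ⟨h.prop, fun _ hle hβ => h.eq_of_le hβ hle⟩⟩

theorem IsCover.exists_isBasicCover_le (h : IsCover G k α) : ∃ β ≤ α, IsBasicCover G k β := by
  simpa only [isBasicCover_iff_minimal] using
    exists_minimal_le_of_wellFoundedLT (IsCover G k) α h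

theorem IsCover.min_const (h : IsCover G k α) : IsCover G k fun v => min (α v) k := by
  intro i j hij
  have := h hij
  dsimp only
  omega

theorem IsBasicCover.apply_le (h : IsBasicCover G k α) (v : Fin n) : α v ≤ k :=
  min_eq_left_iff.1 (congrFun (h.2 _ (fun _ => min_le_left _ _) h.1.min_const) v)

theorem finite_setOf_isBasicCover (G : SimpleGraph (Fin n)) (k : ℕ) :
    {α | IsBasicCover G k α}.Finite :=
  (Set.finite_Iic fun _ => k).subset fun _ h => h.apply_le

theorem IsCover.apply_eq_of_add_le {u v : Fin n} (hβ : IsCover G k β) (hle : β ≤ α)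
    (huv : G.Adj u v) (htight : α u + α v ≤ k) : β u = α u := by
  have hcover : k ≤ β u + β v := hβ huv
  have hu : β u ≤ α u := hle u
  have hv : β v ≤ α v := hle v
  omega

end BasicCover

section CoverExtension

variable {n : ℕ} {ι : Type*} [Fintype ι] {G : SimpleGraph (Fin n)} {k : ℕ} {a : ι → Fin n}
  {c : ι → ℕ} {i : ι} {v : Fin n}

open scoped Classical in
/-- The extension of the values `c` on independent vertices `a` to a `k`-cover of `G`: any other
vertex gets the least value, but at least `k / 2` rounded up, that covers its edges to the vertices
`a`. The lower bound takes care of the edges that avoid `a`. -/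
noncomputable def coverExtension (G : SimpleGraph (Fin n)) (k : ℕ) (a : ι → Fin n) (c : ι → ℕ) :
    Fin n → ℕ :=
  Function.extend a c fun v =>
    max ((k + 1) / 2) (({i | G.Adj (a i) v} : Finset ι).sup fun i => k - c i)

theorem coverExtension_apply (ha : a.Injective) (i : ι) : coverExtension G k a c (a i) = c i :=
  ha.extend_apply c _ i

theorem coverExtension_le_iff (hv : v ∉ Set.range a) {m : ℕ} :
    coverExtension G k a c v ≤ m ↔ (k + 1) / 2 ≤ m ∧ ∀ i, G.Adj (a i) v → k - c i ≤ m := by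
  simp [coverExtension, Function.extend_apply' _ _ _ hv]

variable (G k c) in
theorem half_le_coverExtension (hv : v ∉ Set.range a) : (k + 1) / 2 ≤ coverExtension G k a c v :=
  ((coverExtension_le_iff hv).1 le_rfl).1

theorem le_add_coverExtension (hv : v ∉ Set.range a) (hadj : G.Adj (a i) v) :
    k ≤ c i + coverExtension G k a c v :=
  tsub_le_iff_left.1 (((coverExtension_le_iff hv).1 le_rfl).2 i hadj)

theorem isCover_coverExtension (ha : a.Injective) (hindep : ∀ i j, ¬ G.Adj (a i) (a j)) :
    IsCover G k (coverExtension G k a c) := by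
  intro u v huv
  by_cases hu : u ∈ Set.range a
  · obtain ⟨i, rfl⟩ := hu
    have hv : v ∉ Set.range a := fun ⟨j, hj⟩ => hindep i j (hj ▸ huv)
    rw [coverExtension_apply ha]
    exact le_add_coverExtension hv huv
  by_cases hv : v ∈ Set.range a
  · obtain ⟨i, rfl⟩ := hv
    rw [coverExtension_apply ha, add_comm]
    exact le_add_coverExtension hu huv.symm
  · have := half_le_coverExtension G k c hu
    have := half_le_coverExtension G k c hv
    omega

end CoverExtension

namespace IsFreeParameterPair

variable {n r k : ℕ} {G : SimpleGraph (Fin n)} {a b : Fin r → Fin n} {c : Fin r → ℕ}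

theorem coverExtension_partner_le (h : IsFreeParameterPair G a b) (hc : Antitone c)
    (hck : ∀ i, c i ≤ k / 2) (i : Fin r) : coverExtension G k a c (b i) ≤ k - c i := by
  obtain ⟨-, -, -, hdisj, -, hle⟩ := h
  refine (coverExtension_le_iff fun ⟨j, hj⟩ => hdisj j i hj).2 ⟨?_, fun j hj => ?_⟩
  · have := hck i
    omega
  · exact Nat.sub_le_sub_left (hc (hle j i hj)) k

theorem exists_isBasicCover_comp_eq (h : IsFreeParameterPair G a b) (hc : Antitone c)
    (hck : ∀ i, c i ≤ k / 2) : ∃ β, IsBasicCover G k β ∧ β ∘ a = c := by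
  have hpartner := h.coverExtension_partner_le hc hck
  obtain ⟨ha, -, hindep, -, hadj, -⟩ := h
  obtain ⟨β, hle, hβ⟩ :=
    (isCover_coverExtension (k := k) (c := c) ha hindep).exists_isBasicCover_le
  have htight (i) : coverExtension G k a c (a i) + coverExtension G k a c (b i) ≤ k := by
    rw [coverExtension_apply ha]
    have := hpartner i
    have := hck i
    omega
  exact ⟨β, hβ, funext fun i =>
    (hβ.1.apply_eq_of_add_le hle (hadj i) (htight i)).trans (coverExtension_apply ha i)⟩

end IsFreeParameterPair

theorem card_basicCovers_ge_choose_general {n r : ℕ} (G : SimpleGraph (Fin n))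
    (hfree : HasFreeParameterSet G r) (k : ℕ) :
    (k / 2 + r).choose r ≤ Nat.card {α : Fin n → ℕ // IsBasicCover G k α} := by
  obtain ⟨a, b, hab⟩ := hfree
  have : Finite {α : Fin n → ℕ // IsBasicCover G k α} := finite_setOf_isBasicCover G k
  let Value := Fin (k / 2 + 1)
  have hexists (c : {c : Fin r → Value // Antitone c}) :
      ∃ β : {α : Fin n → ℕ // IsBasicCover G k α}, β.1 ∘ a = fun i => (c.1 i : ℕ) := by
    obtain ⟨β, hβ, hβc⟩ :=
      hab.exists_isBasicCover_comp_eq (Fin.val_strictMono.monotone.comp_antitone c.2)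
        fun i => (c.1 i).is_le
    exact ⟨⟨β, hβ⟩, hβc⟩
  choose β hβ using hexists
  have β_injective : β.Injective := fun c d hcd => Subtype.ext <| funext fun i =>
    Fin.ext <| congrFun ((hβ c).symm.trans (hcd ▸ hβ d)) i
  calc (k / 2 + r).choose r = (Nat.card Value).multichoose r := by
        simp [Value, Nat.multichoose_eq, add_right_comm]
    _ = Nat.card {c : Fin r → Value // Antitone c} := (card_antitone_eq_multichoose Value r).symm
    _ ≤ Nat.card {α : Fin n → ℕ // IsBasicCover G k α} :=
      Nat.card_le_card_of_injective β β_injective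

/-- Let `G` be a connected graph with a free parameter set of cardinality
`r`. Then for every even natural number `k > 2r`, the number of basic `k`-covers of `G` is
at least the binomial coefficient `C(k/2 + 1, r)`. -/
theorem card_basicCovers_ge_choose {n r : ℕ} (G : SimpleGraph (Fin n))
    (hconn : G.Connected) (hfree : HasFreeParameterSet G r) :
    ∀ k : ℕ, Even k → 2 * r < k →
      (k / 2 + 1).choose r ≤ Nat.card {α : Fin n → ℕ // IsBasicCover G k α} := by
  exact fun k _ _ =>
    (choose_succ_le_choose_add _ r).trans (card_basicCovers_ge_choose_general G hfree k)
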